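/- arXiv:2207.06980 — 4 statements merged into one kernel-verified Lean document; each statement's English description precedes it below -/
import Mathlib

section
/- Let α, β, γ be intuitionistic fuzzy values with α ⊂ β ⊂ γ in Atanassov's order. Then JS(α, β) ≤ JS(α, γ) and JS(β, γ) ≤ JS(α, γ). -/
/-- `L p q = p·log₂(2p/(p+q)) + q·log₂(2q/(p+q))`, with Lean's conventions
`0 * log₂ _ = 0` and `x / 0 = 0`, `log₂ 0 = 0` implementing `0·log 0 = 0`
and `0·log(0/0) = 0`. -/
noncomputable def L (p q : ℝ) : ℝ :=
  p * Real.logb 2 (2 * p / (p + q)) + q * Real.logb 2 (2 * q / (p + q))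

/-- An intuitionistic fuzzy value: a pair `⟨μ, ν⟩` with `0 ≤ μ`, `0 ≤ ν`,
`μ + ν ≤ 1` (hence also `μ ≤ 1` and `ν ≤ 1`). -/
@[ext]
structure IFV where
  mu : ℝ
  nu : ℝ
  mu_nonneg : 0 ≤ mu
  nu_nonneg : 0 ≤ nu
  sum_le : mu + nu ≤ 1

/-- `Z(α,β) = L(1−μ_α, 1−μ_β) + L(ν_α, ν_β)`. -/
noncomputable def Z (a b : IFV) : ℝ := L (1 - a.mu) (1 - b.mu) + L a.nu b.nu

/-- The normalized Jensen–Shannon IF divergence `JS(α,β) = √(Z(α,β)/2)`. -/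
noncomputable def JS (a b : IFV) : ℝ := Real.sqrt (Z a b / 2)

/-- Atanassov's order: `α ⊂ β` iff `μ_α ≤ μ_β` and `ν_α ≥ ν_β`. -/
def IFV.sub (a b : IFV) : Prop := a.mu ≤ b.mu ∧ b.nu ≤ a.nu

/-- Strict Atanassov order: `α ⊊ β` iff `α ⊂ β` and `α ≠ β`. -/
def IFV.ssub (a b : IFV) : Prop := a.sub b ∧ a ≠ b

/-- The IFV `⟨1, 0⟩`. -/
def IFV.posOne : IFV := ⟨1, 0, by norm_num, le_rfl, by norm_num⟩

/-- The IFV `⟨0, 1⟩`. -/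
def IFV.negOne : IFV := ⟨0, 1, le_rfl, by norm_num, by norm_num⟩

theorem L_eq_aux {p q : ℝ} (hp : 0 ≤ p) (hq : 0 ≤ q) :
    L p q = (p * Real.log p + q * Real.log q
      - 2 * ((p + q) / 2 * Real.log ((p + q) / 2))) / Real.log 2 := by
  have key : ∀ r s : ℝ, 0 ≤ r → 0 ≤ s →
      r * Real.logb 2 (2 * r / (r + s)) =
        (r * Real.log r - r * Real.log ((r + s) / 2)) / Real.log 2 := by
    intro r s hr hs
    rcases hr.eq_or_lt with h | h
    · simp [← h]
    · have e : 2 * r / (r + s) = r / ((r + s) / 2) := by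
        have : r + s ≠ 0 := by positivity
        field_simp
      rw [e, Real.logb, Real.log_div (by positivity) (by positivity)]
      ring
  unfold L
  rw [key p q hp hq, add_comm p q, key q p hq hp]
  ring

theorem maj_aux {A B t : ℝ} (hA : 0 ≤ A) (hB : 0 ≤ B) (h0 : 0 ≤ t) (h1 : t ≤ 1) {y m : ℝ}
    (hy : y = A + t * (B - A)) (hm : 2 * m = A + 2 * B - y) :
    y * Real.log y + 2 * (m * Real.log m) ≤ A * Real.log A + 2 * (B * Real.log B) := by
  have c1 := Real.convexOn_mul_log.2 (Set.mem_Ici.2 hA) (Set.mem_Ici.2 hB)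
    (sub_nonneg.2 h1) h0 (by ring)
  have c2 := Real.convexOn_mul_log.2 (Set.mem_Ici.2 hA) (Set.mem_Ici.2 hB)
    (show 0 ≤ t / 2 by linarith) (show 0 ≤ 1 - t / 2 by linarith) (by ring)
  simp only [smul_eq_mul] at c1 c2
  rw [show (1 - t) * A + t * B = y by rw [hy]; ring] at c1
  rw [show t / 2 * A + (1 - t / 2) * B = m by linarith] at c2
  linarith

theorem L_mono_aux {x y z : ℝ} (hx : 0 ≤ x) (hxy : x ≤ y) (hyz : y ≤ z) :
    L x y ≤ L x z ∧ L y z ≤ L x z := by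
  rcases (hxy.trans hyz).eq_or_lt with h | h
  · obtain rfl : x = y := by linarith
    subst h
    simp
  · have hl : 0 < Real.log 2 := Real.log_pos (by norm_num)
    rw [L_eq_aux hx (by linarith), L_eq_aux hx (by linarith),
      L_eq_aux (by linarith : (0:ℝ) ≤ y) (by linarith)]
    constructor
    · have d : 0 < z - (x + y) / 2 := by linarith
      have := maj_aux (A := z) (B := (x + y) / 2) (t := (z - y) / (z - (x + y) / 2))
        (y := y) (m := (x + z) / 2) (by linarith) (by linarith)
        (div_nonneg (by linarith) d.le) ((div_le_one d).2 (by linarith))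
        (by linarith [div_mul_cancel₀ (z - y) d.ne']) (by ring)
      gcongr ?_ / _
      linarith
    · have d : 0 < (y + z) / 2 - x := by linarith
      have := maj_aux (A := x) (B := (y + z) / 2) (t := (y - x) / ((y + z) / 2 - x))
        (y := y) (m := (x + z) / 2) (by linarith) (by linarith)
        (div_nonneg (by linarith) d.le) ((div_le_one d).2 (by linarith))
        (by linarith [div_mul_cancel₀ (y - x) d.ne']) (by ring)
      gcongr ?_ / _
      linarith

theorem L_comm_aux (p q : ℝ) : L p q = L q p := by
  unfold L
  rw [add_comm p q]
  ring

theorem JS_sub_chain_le (a b c : IFV) (h1 : a.sub b) (h2 : b.sub c) :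
    JS a b ≤ JS a c ∧ JS b c ≤ JS a c := by
  obtain ⟨m1, n1⟩ := h1
  obtain ⟨m2, n2⟩ := h2
  have hc : 0 ≤ 1 - c.mu := by linarith [c.nu_nonneg, c.sum_le]
  obtain ⟨u1, u2⟩ := L_mono_aux hc (sub_le_sub_left m2 1) (sub_le_sub_left m1 1)
  obtain ⟨v1, v2⟩ := L_mono_aux c.nu_nonneg n2 n1
  rw [L_comm_aux (1 - c.mu) (1 - a.mu)] at u1 u2
  rw [L_comm_aux c.nu a.nu] at v1 v2
  rw [L_comm_aux (1 - c.mu) (1 - b.mu)] at u1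
  rw [L_comm_aux (1 - b.mu) (1 - a.mu)] at u2
  rw [L_comm_aux c.nu b.nu] at v1
  rw [L_comm_aux b.nu a.nu] at v2
  unfold JS Z
  constructor <;> apply Real.sqrt_le_sqrt <;> linarith
end

section
/- Let α, β, γ be intuitionistic fuzzy values with α ⊊ β ⊊ γ in Atanassov's order. Then JS(α, β) < JS(α, γ) and JS(β, γ) < JS(α, γ). -/
theorem L_eq (p q : ℝ) (hp : 0 ≤ p) (hq : 0 ≤ q) :
    L p q = (p * Real.log p + q * Real.log q
      - 2 * ((p + q) / 2 * Real.log ((p + q) / 2))) / Real.log 2 := by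
  have key : ∀ x y : ℝ, 0 ≤ x → 0 ≤ y →
      x * Real.log (2 * x / (x + y)) = x * Real.log x - x * Real.log ((x + y) / 2) := by
    intro x y hx hy
    rcases hx.eq_or_lt with h | h
    · subst h; simp
    · have h3 : 2 * x / (x + y) = x / ((x + y) / 2) := by field_simp
      rw [h3, Real.log_div (by positivity) (by positivity)]
      ring
  have h1 := key p q hp hq
  have h2 := key q p hq hp
  rw [add_comm q p] at h2
  unfold L Real.logb
  rw [← mul_div_assoc, ← mul_div_assoc, h1, h2]
  ring

theorem slope_lt {x y z w : ℝ} (hx : 0 ≤ x) (hxy : x < y) (hzw : z < w) (hxz : x ≤ z)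
    (hyw : y ≤ w) (h : x < z ∨ y < w) :
    (y * Real.log y - x * Real.log x) / (y - x) < (w * Real.log w - z * Real.log z) / (w - z) := by
  have C := Real.strictConvexOn_mul_log
  have A : y < w → (y * Real.log y - x * Real.log x) / (y - x)
      < (w * Real.log w - x * Real.log x) / (w - x) := fun h =>
    C.secant_strict_mono (a := x) (x := y) (y := w) hx (Set.mem_Ici.2 (by linarith))
      (Set.mem_Ici.2 (by linarith)) hxy.ne' (by linarith : x < w).ne' h
  have B : x < z → (w * Real.log w - x * Real.log x) / (w - x)
      < (w * Real.log w - z * Real.log z) / (w - z) := by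
    intro h
    have := C.secant_strict_mono (a := w) (x := x) (y := z) (Set.mem_Ici.2 (by linarith)) hx
      (Set.mem_Ici.2 (by linarith)) (by linarith : x < w).ne hzw.ne h
    rw [← neg_div_neg_eq, ← neg_div_neg_eq (z * Real.log z - _)] at this
    simpa only [neg_sub] using this
  rcases hxz.eq_or_lt with e1 | e1
  · subst e1
    exact A (h.resolve_left (lt_irrefl _))
  · rcases hyw.eq_or_lt with e2 | e2
    · subst e2; exact B e1
    · exact (A e2).trans (B e1)

theorem L_right {p q r : ℝ} (hr : 0 ≤ r) (hrq : r < q) (hqp : q ≤ p) : L p q < L p r := by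
  rw [L_eq p q (by linarith) (by linarith), L_eq p r (by linarith) hr]
  have h2 : 0 < Real.log 2 := Real.log_pos (by norm_num)
  apply div_lt_div_of_pos_right _ h2
  have := slope_lt (x := r) (y := q) (z := (p + r) / 2) (w := (p + q) / 2) hr hrq
    (by linarith) (by linarith) (by linarith) (Or.inl (by linarith))
  rw [show (p + q) / 2 - (p + r) / 2 = (q - r) / 2 by ring,
    div_lt_div_iff₀ (by linarith) (by linarith)] at this
  have h3 : 0 < q - r := by linarith
  nlinarith

theorem L_left {p q r : ℝ} (hr : 0 ≤ r) (hrq : r ≤ q) (hqp : q < p) : L q r < L p r := by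
  rw [L_eq p r (by linarith) (by linarith), L_eq q r (by linarith) hr]
  have h2 : 0 < Real.log 2 := Real.log_pos (by norm_num)
  apply div_lt_div_of_pos_right _ h2
  have := slope_lt (x := (q + r) / 2) (y := (p + r) / 2) (z := q) (w := p) (by linarith)
    (by linarith) hqp (by linarith) (by linarith) (Or.inr (by linarith))
  rw [show (p + r) / 2 - (q + r) / 2 = (p - q) / 2 by ring,
    div_lt_div_iff₀ (by linarith) (by linarith)] at this
  have h3 : 0 < p - q := by linarith
  nlinarith

theorem L_right_le {p q r : ℝ} (hr : 0 ≤ r) (hrq : r ≤ q) (hqp : q ≤ p) : L p q ≤ L p r := by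
  rcases hrq.eq_or_lt with h | h
  · rw [h]
  · exact (L_right hr h hqp).le

theorem L_left_le {p q r : ℝ} (hr : 0 ≤ r) (hrq : r ≤ q) (hqp : q ≤ p) : L q r ≤ L p r := by
  rcases hqp.eq_or_lt with h | h
  · rw [h]
  · exact (L_left hr hrq h).le

theorem L_nonneg {p q : ℝ} (hq : 0 ≤ q) (hqp : q ≤ p) : 0 ≤ L p q := by
  have h := L_right_le hq hqp le_rfl
  rw [L_eq p p (by linarith) (by linarith)] at h
  have e : (p + p) / 2 = p := by ring
  rw [e] at h
  have e2 : p * Real.log p + p * Real.log p - 2 * (p * Real.log p) = 0 := by ring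
  rwa [e2, zero_div] at h

theorem ssub_cases {a b : IFV} (h : a.ssub b) : a.mu < b.mu ∨ b.nu < a.nu := by
  obtain ⟨⟨h1, h2⟩, h3⟩ := h
  by_contra! hc
  exact h3 (IFV.ext (le_antisymm h1 hc.1) (le_antisymm hc.2 h2))

theorem JS_ssub_chain_lt (a b c : IFV) (h1 : a.ssub b) (h2 : b.ssub c) :
    JS a b < JS a c ∧ JS b c < JS a c := by
  have d1 := ssub_cases h1
  have d2 := ssub_cases h2
  obtain ⟨⟨m1, n1⟩, -⟩ := h1
  obtain ⟨⟨m2, n2⟩, -⟩ := h2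
  have c1 := c.nu_nonneg
  have c2 := c.sum_le
  have p0 : 0 ≤ 1 - c.mu := by linarith
  have p1 : 1 - c.mu ≤ 1 - b.mu := by linarith
  have p2 : 1 - b.mu ≤ 1 - a.mu := by linarith
  constructor
  · apply Real.sqrt_lt_sqrt
    · have := L_nonneg (p0.trans p1) p2
      have := L_nonneg (c1.trans n2) n1
      unfold Z; linarith
    · have k1 := L_right_le p0 p1 p2
      have k2 := L_right_le c1 n2 n1
      unfold Z
      rcases d2 with d | d
      · have := L_right p0 (by linarith : 1 - c.mu < 1 - b.mu) p2
        linarith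
      · have := L_right c1 d n1
        linarith
  · apply Real.sqrt_lt_sqrt
    · have := L_nonneg p0 p1
      have := L_nonneg c1 n2
      unfold Z; linarith
    · have k1 := L_left_le p0 p1 p2
      have k2 := L_left_le c1 n2 n1
      unfold Z
      rcases d1 with d | d
      · have := L_left p0 p1 (by linarith : 1 - b.mu < 1 - a.mu)
        linarith
      · have := L_left c1 n2 d
        linarith
end

section
/- Define the entropy E(α) = 1 − JS(α, α^∁) for an intuitionistic fuzzy value α, where α^∁ = ⟨ν_α, μ_α⟩. Then E(α) = 1 if and only if μ_α = ν_α. -/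
/-- The complement `α^∁ = ⟨ν_α, μ_α⟩`. -/
def IFV.compl (a : IFV) : IFV :=
  ⟨a.nu, a.mu, a.nu_nonneg, a.mu_nonneg, by linarith [a.sum_le]⟩

/-- The entropy `E(α) = 1 − JS(α, α^∁)`. -/
noncomputable def E (a : IFV) : ℝ := 1 - JS a a.compl

theorem half_term (p q : ℝ) (hp : 0 ≤ p) (hq : 0 ≤ q) (h : p ≠ q) :
    (p - q) / 2 < p * Real.log (2 * p / (p + q)) := by
  rcases hp.eq_or_lt with rfl | hp'
  · have : 0 < q := lt_of_le_of_ne hq h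
    simp
    linarith
  · have hs : 0 < p + q := by linarith
    have hx : 0 < (p + q) / (2 * p) := by positivity
    have hne : (p + q) / (2 * p) ≠ 1 := by
      intro h1
      rw [div_eq_one_iff_eq (by positivity)] at h1
      exact h (by linarith)
    have h2 := Real.log_lt_sub_one_of_pos hx hne
    have h3 : Real.log (2 * p / (p + q)) = - Real.log ((p + q) / (2 * p)) := by
      rw [← Real.log_inv, inv_div]
    have h4 := mul_lt_mul_of_pos_left h2 hp'
    have h5 : p * ((p + q) / (2 * p) - 1) = (q - p) / 2 := by
      field_simp
      ring
    rw [h3]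
    linarith

theorem L_pos (p q : ℝ) (hp : 0 ≤ p) (hq : 0 ≤ q) (h : p ≠ q) : 0 < L p q := by
  have h1 := half_term p q hp hq h
  have h2 := half_term q p hq hp h.symm
  rw [add_comm q p] at h2
  have h3 : L p q = (p * Real.log (2 * p / (p + q)) + q * Real.log (2 * q / (p + q)))
      / Real.log 2 := by
    unfold L Real.logb
    ring
  rw [h3]
  exact div_pos (by linarith) (Real.log_pos (by norm_num))

theorem L_self (p : ℝ) : L p p = 0 := by
  unfold L
  rcases eq_or_ne p 0 with rfl | hp
  · simp
  · have : 2 * p / (p + p) = 1 := by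
      rw [← two_mul]
      exact div_self (by simpa using hp)
    simp [this]

theorem entropy_eq_one_iff (a : IFV) : E a = 1 ↔ a.mu = a.nu := by
  have hm := a.mu_nonneg
  have hn := a.nu_nonneg
  have hs := a.sum_le
  constructor
  · intro h
    by_contra hne
    have h1 : 0 < L (1 - a.mu) (1 - a.nu) :=
      L_pos _ _ (by linarith) (by linarith) (fun h => hne (by linarith))
    have h2 : 0 < L a.nu a.mu := L_pos _ _ hn hm (fun h => hne h.symm)
    have h3 : 0 < JS a a.compl := by
      apply Real.sqrt_pos.mpr
      unfold Z IFV.compl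
      dsimp only
      linarith
    unfold E at h
    linarith
  · intro h
    simp [E, JS, Z, IFV.compl, h, L_self]
end

section
/- Define Xiao's distance for intuitionistic fuzzy values α, β by d_χ(α, β) = √( (1/2)[ L(μ_α, μ_β) + L(ν_α, ν_β) + L(π_α, π_β) ] ), where π_α = 1 − μ_α − ν_α. For every λ ∈ [0,1]: d_χ(⟨1,0⟩, ⟨λ,0⟩) = √( (1/2)[ log₂(2/(1+λ)) + λ·log₂(2λ/(1+λ)) + (1−λ) ] ) = d_χ(⟨1,0⟩, ⟨λ,1−λ⟩), and d_χ(⟨0,1⟩, ⟨λ,0⟩) = 1. -/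
/-- Xiao's distance
`d_χ(α,β) = √((1/2)[L(μ_α,μ_β)+L(ν_α,ν_β)+L(π_α,π_β)])` with
`π_α = 1 − μ_α − ν_α`. -/
noncomputable def dChi (a b : IFV) : ℝ :=
  Real.sqrt ((L a.mu b.mu + L a.nu b.nu +
    L (1 - a.mu - a.nu) (1 - b.mu - b.nu)) / 2)

theorem L_zero_left_aux (q : ℝ) : L 0 q = q := by
  unfold L
  by_cases hq : q = 0
  · simp [hq]
  · have h : 2 * q / (0 + q) = 2 := by
      rw [zero_add]; field_simp
    rw [h, Real.logb_self_eq_one (by norm_num)]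
    ring

theorem L_zero_right_aux (p : ℝ) : L p 0 = p := by
  have h : L p 0 = L 0 p := by
    unfold L
    rw [add_comm p 0]; ring
  rw [h, L_zero_left_aux]

theorem dChi_degenerate (l : ℝ) (hl0 : 0 ≤ l) (hl1 : l ≤ 1) :
    dChi IFV.posOne ⟨l, 0, hl0, le_rfl, by linarith⟩ =
      Real.sqrt ((Real.logb 2 (2 / (1 + l)) + l * Real.logb 2 (2 * l / (1 + l))
        + (1 - l)) / 2) ∧
    dChi IFV.posOne ⟨l, 0, hl0, le_rfl, by linarith⟩ =
      dChi IFV.posOne ⟨l, 1 - l, hl0, by linarith, by linarith⟩ ∧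
    dChi IFV.negOne ⟨l, 0, hl0, le_rfl, by linarith⟩ = 1 := by
  have e : (1:ℝ) - 1 - 0 = 0 := by norm_num
  have e2 : (1:ℝ) - 0 - 1 = 0 := by norm_num
  have e3 : 1 - l - (1 - l) = 0 := by ring
  refine ⟨?_, ?_, ?_⟩
  · simp only [dChi, IFV.posOne, e, L_zero_left_aux]
    congr 2
    simp only [L, mul_one, one_mul]
    ring
  · simp only [dChi, IFV.posOne, e, e3, L_zero_left_aux]
    congr 2
    ring
  · simp only [dChi, IFV.negOne, e2, L_zero_left_aux, L_zero_right_aux]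
    rw [show (l + 1 + (1 - l - 0)) / 2 = 1 by ring, Real.sqrt_one]
end
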